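/- Let G be a group such that every subgroup of G of finite index has finite abelianization. Let M be a group and ρ : G → M a group homomorphism whose range is virtually abelian, i.e. there exists a commutative subgroup A of the range of ρ with finite index in the range. Then the range of ρ is finite. -/

import Mathlib

/-!
The finiteness hypothesis passes to quotients and to subgroups of finite index. If `H` has finite
index and finite abelianization `H ⧸ ⁅H, H⁆`, then `⁅H, H⁆` again has finite index; hence all terms
of the derived series have finite index, and if one of them is trivial the group is finite.
-/

open Subgroup

theorem abelianization_map_surjective {G H : Type*} [Group G] [Group H] {f : G →* H}
    (hf : Function.Surjective f) : Function.Surjective (Abelianization.map f) := by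
  intro y
  obtain ⟨h, rfl⟩ := QuotientGroup.mk_surjective y
  obtain ⟨g, rfl⟩ := hf h
  exact ⟨Abelianization.of g, rfl⟩

/-- A group is *FAb* if each of its subgroups of finite index has finite abelianization. For
`G = π₁(X)` with `X` compact Kähler, this is the vanishing of the augmented irregularity of `X`. -/
def IsFAb (G : Type*) [Group G] : Prop :=
  ∀ (H : Subgroup G) [H.FiniteIndex], Finite (Abelianization H)

namespace IsFAb

variable {G : Type*} [Group G]

theorem of_surjective {Q : Type*} [Group Q] (hG : IsFAb G) {f : G →* Q}
    (hf : Function.Surjective f) : IsFAb Q := by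
  intro H hH
  have : (H.comap f).FiniteIndex :=
    ⟨(H.index_comap_of_surjective hf).trans_ne hH.index_ne_zero⟩
  have : Finite (Abelianization (H.comap f)) := hG _
  exact Finite.of_surjective _ <|
    abelianization_map_surjective (f.subgroupComap_surjective_of_surjective H hf)

theorem subgroup (hG : IsFAb G) (H : Subgroup G) [hH : H.FiniteIndex] : IsFAb H := by
  intro K hK
  have : (K.map H.subtype).FiniteIndex :=
    ⟨(index_map_subtype K).trans_ne (mul_ne_zero hK.index_ne_zero hH.index_ne_zero)⟩
  have : Finite (Abelianization (K.map H.subtype)) := hG _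
  let e : K ≃* K.map H.subtype := K.equivMapOfInjective H.subtype H.subtype_injective
  exact .of_equiv _ e.abelianizationCongr.symm.toEquiv

theorem finiteIndex_commutator (hG : IsFAb G) (H : Subgroup G) [hH : H.FiniteIndex] :
    ⁅H, H⁆.FiniteIndex := by
  have : Finite (H ⧸ commutator H) := hG H
  rw [finiteIndex_iff, ← map_subtype_commutator, index_map_subtype]
  exact mul_ne_zero index_ne_zero_of_finite hH.index_ne_zero

theorem finiteIndex_derivedSeries (hG : IsFAb G) (n : ℕ) : (derivedSeries G n).FiniteIndex := by
  induction n with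
  | zero => exact inferInstanceAs (⊤ : Subgroup G).FiniteIndex
  | succ n ih => exact hG.finiteIndex_commutator _

theorem finite_of_isSolvable [hsolv : Group.IsSolvable G] (hG : IsFAb G) : Finite G := by
  obtain ⟨n, hn⟩ := hsolv.solvable
  have : (⊥ : Subgroup G).FiniteIndex := hn ▸ hG.finiteIndex_derivedSeries n
  exact (finite_iff_finite_and_finiteIndex ⊥).mpr ⟨inferInstance, this⟩

theorem finite_of_isSolvable_of_finiteIndex (hG : IsFAb G) (A : Subgroup G) [Group.IsSolvable A]
    [hA : A.FiniteIndex] : Finite G :=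
  (finite_iff_finite_and_finiteIndex A).mpr ⟨(hG.subgroup A).finite_of_isSolvable, hA⟩

end IsFAb

theorem stmt_1_general {G M : Type*} [Group G] [Group M] (hG : IsFAb G) (ρ : G →* M)
    (A : Subgroup ρ.range) [Group.IsSolvable A] [A.FiniteIndex] : Finite ρ.range :=
  (hG.of_surjective ρ.rangeRestrict_surjective).finite_of_isSolvable_of_finiteIndex A

/-- If every finite-index subgroup of `G` has finite abelianization, and `ρ : G →* M`
has virtually abelian range (there is a commutative subgroup of the range of finite
index in the range), then the range of `ρ` is finite. -/
theorem stmt_1 {G M : Type*} [Group G] [Group M]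
    (hG : ∀ H : Subgroup G, H.index ≠ 0 → Finite (Abelianization H))
    (ρ : G →* M) (A : Subgroup ρ.range)
    (hA : ∀ x ∈ A, ∀ y ∈ A, x * y = y * x)
    (hidx : A.index ≠ 0) :
    Finite ρ.range := by
  have : A.FiniteIndex := ⟨hidx⟩
  have : Group.IsSolvable A := Group.isSolvable_of_comm fun x y ↦ Subtype.ext (hA x x.2 y y.2)
  exact stmt_1_general (fun H hH ↦ hG H hH.index_ne_zero) ρ A
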